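/- arXiv:1511.03841 — 3 statements merged into one kernel-verified Lean document; each statement's English description precedes it below -/
import Mathlib

section
/- Let X₀, X, X₁ be Banach spaces, let i₀ : X₀ → X be a compact linear operator and i₁ : X → X₁ an injective continuous linear operator. Let T > 0, 1 ≤ p < ∞ and 1 ≤ q ≤ ∞. Suppose (u_n) is a sequence of strongly measurable functions u_n : [0,T] → X₀ with sup_n ∫₀^T ‖u_n(t)‖_{X₀}^p dt < ∞, and suppose there exist w_n ∈ X₁ and Bochner-integrable functions v_n : [0,T] → X₁ with sup_n ‖v_n‖_{L^q([0,T];X₁)} < ∞ such that i₁(i₀(u_n(t))) = w_n + ∫₀^t v_n(s) ds for almost every t ∈ [0,T]. Then the sequence (i₀ ∘ u_n) has a subsequence converging strongly in L^p([0,T]; X). -/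
open MeasureTheory Filter
open scoped ENNReal NNReal

/-!
Since `i₀` is compact and `i₁` injective, Ehrling's inequality
`‖i₀ x‖ ≤ ε ‖x‖ + C_ε ‖i₁ (i₀ x)‖` holds on `X₀`, hence also between the `L^p` spaces. As `(u_n)`
is bounded in `L^p(X₀)`, total boundedness of `(i₀ ∘ u_n)` in `L^p(X)` reduces to that of
`(i₁ ∘ i₀ ∘ u_n)` in `L^p(X₁)`. The primitives `w_n + ∫₀^t v_n` have uniformly bounded variation, so
on a partition of mesh `h` each of them is determined in `L^p`, up to `O(h^{1/p})`, by its finitely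
many cell averages; these averages are images under the compact operator `i₁ ∘ i₀` of bounded
averages in `X₀`.
-/

section TotallyBounded

variable {ι α : Type*}

theorem totallyBounded_of_forall_eval_image {X : ι → Type*} [∀ i, UniformSpace (X i)]
    {S : Set (∀ i, X i)} (hS : ∀ i, TotallyBounded (Function.eval i '' S)) :
    TotallyBounded S := by
  rw [totallyBounded_iff_ultrafilter]
  intro 𝓕 h𝓕
  rw [cauchy_pi_iff']
  intro i
  refine totallyBounded_iff_ultrafilter.1 (hS i) (𝓕.map (Function.eval i)) ?_
  simpa only [Ultrafilter.coe_map, ← map_principal] using map_mono h𝓕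

theorem totallyBounded_range_of_edist_lt [PseudoEMetricSpace α] {f : ι → α}
    (h : ∀ ε > 0, ∃ (β : Type*) (_ : PseudoEMetricSpace β) (g : ι → β),
      TotallyBounded (Set.range g) ∧
        ∃ δ > 0, ∀ i j, edist (g i) (g j) < δ → edist (f i) (f j) < ε) :
    TotallyBounded (Set.range f) := by
  refine EMetric.totallyBounded_iff.2 fun ε hε ↦ ?_
  obtain ⟨β, _, g, hg, δ, hδ, hgf⟩ := h ε hε
  rw [← Set.image_univ] at hg
  obtain ⟨s, -, hs_fin, hs⟩ :=
    Set.exists_subset_image_finite_and.1 (EMetric.totallyBounded_iff'.1 hg δ hδ)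
  refine ⟨f '' s, hs_fin.image f, Set.range_subset_iff.2 fun i ↦ ?_⟩
  obtain ⟨j, hjs, hij⟩ := Set.mem_iUnion₂.1 (Set.biUnion_image.subset (hs ⟨i, trivial, rfl⟩))
  exact Set.mem_biUnion (Set.mem_image_of_mem f hjs) (hgf i j hij)

theorem exists_tendsto_subseq_of_totallyBounded [PseudoMetricSpace α] [CompleteSpace α]
    {F : ℕ → α} (hF : TotallyBounded (Set.range F)) :
    ∃ φ : ℕ → ℕ, StrictMono φ ∧ ∃ a, Tendsto (F ∘ φ) atTop (nhds a) := by
  obtain ⟨a, -, φ, hφ, hlim⟩ := (hF.closure.isCompact_of_isClosed isClosed_closure).tendsto_subseq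
    fun n ↦ subset_closure ⟨n, rfl⟩
  exact ⟨φ, hφ, a, hlim⟩

end TotallyBounded

section UniformBounds

variable {α ι E : Type*} {m : MeasurableSpace α} {μ : Measure α} [NormedAddCommGroup E]
  {p : ℝ≥0∞} {f : ι → α → E} {C : ℝ≥0∞}

theorem isBounded_range_toLp [Fact (1 ≤ p)] (hf : ∀ i, MemLp (f i) p μ) (hC : C ≠ ⊤)
    (hfC : ∀ i, eLpNorm (f i) p μ ≤ C) :
    Bornology.IsBounded (Set.range fun i ↦ (hf i).toLp (f i)) := by
  refine isBounded_iff_forall_norm_le.2 ⟨C.toReal, Set.forall_mem_range.2 fun i ↦ ?_⟩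
  rw [Lp.norm_toLp]
  exact ENNReal.toReal_mono hC (hfC i)

theorem exists_eLpNorm_one_le [IsFiniteMeasure μ] (hp : 1 ≤ p)
    (hf : ∀ i, AEStronglyMeasurable (f i) μ) (hC : C ≠ ⊤)
    (hfC : ∀ i, eLpNorm (f i) p μ ≤ C) :
    ∃ C' ≠ ⊤, ∀ i, eLpNorm (f i) 1 μ ≤ C' := by
  refine ⟨C * μ Set.univ ^ (1 - 1 / p.toReal), ?_, fun i ↦ ?_⟩
  · have hexp : 1 / p.toReal ≤ 1 := by
      obtain rfl | hp_top := eq_or_ne p ⊤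
      · simp
      · exact (div_le_one₀ (ENNReal.toReal_pos (by positivity) hp_top)).2
          (ENNReal.toReal_one ▸ ENNReal.toReal_mono hp_top hp)
    exact ENNReal.mul_ne_top hC (ENNReal.rpow_ne_top_of_nonneg (sub_nonneg.2 hexp) (by finiteness))
  · refine (eLpNorm_le_eLpNorm_mul_rpow_measure_univ hp (hf i)).trans ?_
    rw [ENNReal.toReal_one, div_one]
    gcongr
    exact hfC i

end UniformBounds

section Variation

theorem eVariationOn_sub_le {α E : Type*} [LinearOrder α] [SeminormedAddCommGroup E]
    (f g : α → E) (s : Set α) :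
    eVariationOn (f - g) s ≤ eVariationOn f s + eVariationOn g s := by
  refine iSup_le fun ⟨n, x, hx_mono, hx_mem⟩ ↦ ?_
  calc ∑ i ∈ Finset.range n, edist ((f - g) (x (i + 1))) ((f - g) (x i))
      ≤ ∑ i ∈ Finset.range n, (edist (f (x (i + 1))) (f (x i)) + edist (g (x (i + 1))) (g (x i))) :=
        Finset.sum_le_sum fun i _ ↦ by
          simp only [Pi.sub_apply, edist_eq_enorm_sub, sub_sub_sub_comm (f _)]
          exact enorm_sub_le
    _ ≤ eVariationOn f s + eVariationOn g s := by
        rw [Finset.sum_add_distrib]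
        gcongr <;> exact eVariationOn.sum_le hx_mono hx_mem

theorem biUnion_range_Ioc_succ {α : Type*} [LinearOrder α] {x : ℕ → α} (hx : Monotone x) (n : ℕ) :
    ⋃ i ∈ Finset.range n, Set.Ioc (x i) (x (i + 1)) = Set.Ioc (x 0) (x n) := by
  simpa using hx.biUnion_Ico_Ioc_map_succ 0 n

variable {E : Type*} [NormedAddCommGroup E]

theorem eVariationOn_primitive_le [NormedSpace ℝ E] {v : ℝ → E} {a b : ℝ}
    (hv : IntegrableOn v (Set.Ioc a b)) (w : E) :
    eVariationOn (fun t ↦ w + ∫ s in a..t, v s) (Set.Icc a b) ≤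
      eLpNorm v 1 (volume.restrict (Set.Ioc a b)) := by
  have hv_int {t : ℝ} (ht : t ∈ Set.Icc a b) : IntervalIntegrable v volume a t :=
    (intervalIntegrable_iff_integrableOn_Ioc_of_le ht.1).2
      (hv.mono_set (Set.Ioc_subset_Ioc_right ht.2))
  refine iSup_le fun ⟨n, x, hx_mono, hx_mem⟩ ↦ ?_
  have hincr (i : ℕ) : edist (w + ∫ s in a..x (i + 1), v s) (w + ∫ s in a..x i, v s) ≤
      ∫⁻ s in Set.Ioc (x i) (x (i + 1)), ‖v s‖ₑ := by
    rw [edist_add_left, edist_eq_enorm_sub, intervalIntegral.integral_interval_sub_left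
      (hv_int (hx_mem _)) (hv_int (hx_mem _)),
      intervalIntegral.integral_of_le (hx_mono i.le_succ)]
    exact enorm_integral_le_lintegral_enorm _
  calc _ ≤ ∑ i ∈ Finset.range n, ∫⁻ s in Set.Ioc (x i) (x (i + 1)), ‖v s‖ₑ :=
        Finset.sum_le_sum fun i _ ↦ hincr i
    _ = ∫⁻ s in Set.Ioc (x 0) (x n), ‖v s‖ₑ := by
        rw [← biUnion_range_Ioc_succ hx_mono]
        exact (lintegral_biUnion_finset (hx_mono.pairwise_disjoint_on_Ioc_succ.set_pairwise _)
          (fun _ _ ↦ measurableSet_Ioc) _).symm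
    _ ≤ eLpNorm v 1 (volume.restrict (Set.Ioc a b)) := by
        rw [eLpNorm_one_eq_lintegral_enorm]
        exact lintegral_mono_set (Set.Ioc_subset_Ioc (hx_mem 0).1 (hx_mem n).2)

end Variation

section Cells

variable {α E : Type*} {m : MeasurableSpace α} {μ : Measure α} [NormedAddCommGroup E]
  {f : α → E} {p : ℝ≥0∞}

theorem eLpNorm_restrict_biUnion_finset_le {ι : Type*} {s : Finset ι} {S : ι → Set α}
    (hS : ∀ i ∈ s, MeasurableSet (S i)) (hS_disj : (s : Set ι).PairwiseDisjoint S)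
    (hf : AEStronglyMeasurable f (μ.restrict (⋃ i ∈ s, S i))) (hp : 1 ≤ p) :
    eLpNorm f p (μ.restrict (⋃ i ∈ s, S i)) ≤ ∑ i ∈ s, eLpNorm f p (μ.restrict (S i)) := by
  rw [← eLpNorm_indicator_eq_eLpNorm_restrict (s.measurableSet_biUnion hS)]
  have hind : (⋃ i ∈ s, S i).indicator f = ∑ i ∈ s, (S i).indicator f := by
    ext t
    rw [Finset.indicator_biUnion_apply s S hS_disj, Finset.sum_apply]
  rw [hind]
  refine (eLpNorm_sum_le (fun i hi ↦ ?_) hp).trans_eq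
    (Finset.sum_congr rfl fun i hi ↦ eLpNorm_indicator_eq_eLpNorm_restrict (hS i hi))
  exact (aestronglyMeasurable_indicator_iff (hS i hi)).2
    (hf.mono_set (Set.subset_biUnion_of_mem (u := S) hi))

variable [NormedSpace ℝ E] [CompleteSpace E] {S : Set α} {b : ℝ≥0∞}

theorem enorm_le_enorm_setAverage_add (hS : MeasurableSet S) (hS_zero : μ S ≠ 0) (hS_top : μ S ≠ ⊤)
    (hf : IntegrableOn f S μ) (hosc : ∀ s ∈ S, ∀ t ∈ S, edist (f s) (f t) ≤ b)
    {t : α} (ht : t ∈ S) :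
    ‖f t‖ₑ ≤ ‖⨍ s in S, f s ∂μ‖ₑ + b := by
  obtain rfl | hb := eq_or_ne b ⊤
  · simp
  have hmem : (⨍ s in S, f s ∂μ) ∈ Metric.closedBall (f t) b.toReal := by
    refine (convex_closedBall _ _).set_average_mem Metric.isClosed_closedBall hS_zero hS_top
      (ae_restrict_of_forall_mem hS fun s hs ↦ ?_) hf
    simpa only [Metric.mem_closedBall, dist_edist] using ENNReal.toReal_mono hb (hosc s hs t ht)
  have hdist : edist (f t) (⨍ s in S, f s ∂μ) ≤ b := by
    rw [edist_comm, edist_dist]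
    exact ENNReal.ofReal_le_of_le_toReal hmem
  calc ‖f t‖ₑ = edist (f t) 0 := (edist_zero_right _).symm
    _ ≤ edist (f t) (⨍ s in S, f s ∂μ) + edist (⨍ s in S, f s ∂μ) 0 := edist_triangle _ _ _
    _ ≤ ‖⨍ s in S, f s ∂μ‖ₑ + b := by
      rw [edist_zero_right, add_comm]
      gcongr

theorem eLpNorm_restrict_le_of_edist_le (hS : MeasurableSet S) (hS_top : μ S ≠ ⊤)
    (hf : IntegrableOn f S μ) (hosc : ∀ s ∈ S, ∀ t ∈ S, edist (f s) (f t) ≤ b) :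
    eLpNorm f p (μ.restrict S) ≤ (‖⨍ s in S, f s ∂μ‖ₑ + b) * μ S ^ p.toReal⁻¹ := by
  obtain hS_zero | hS_zero := eq_or_ne (μ S) 0
  · simp [Measure.restrict_eq_zero.2 hS_zero]
  simpa using eLpNorm_le_of_ae_enorm_bound (ae_restrict_of_forall_mem hS
    fun t ht ↦ enorm_le_enorm_setAverage_add hS hS_zero hS_top hf hosc ht)

end Cells

section Intervals

variable {E : Type*} [NormedAddCommGroup E] [NormedSpace ℝ E] [CompleteSpace E] {p : ℝ≥0∞}

theorem eLpNorm_restrict_Ioc_le_sum_setAverage_add_eVariationOn {f : ℝ → E} (hp : 1 ≤ p) {x : ℕ → ℝ}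
    (hx : Monotone x) {N : ℕ} {h : ℝ≥0∞} (hx_le : ∀ i, volume (Set.Ioc (x i) (x (i + 1))) ≤ h)
    (hf : IntegrableOn f (Set.Ioc (x 0) (x N))) :
    eLpNorm f p (volume.restrict (Set.Ioc (x 0) (x N))) ≤
      (∑ i ∈ Finset.range N, ‖⨍ t in Set.Ioc (x i) (x (i + 1)), f t‖ₑ +
        eVariationOn f (Set.Icc (x 0) (x N))) * h ^ p.toReal⁻¹ := by
  have hcell : ∀ i ∈ Finset.range N, eLpNorm f p (volume.restrict (Set.Ioc (x i) (x (i + 1)))) ≤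
      (‖⨍ t in Set.Ioc (x i) (x (i + 1)), f t‖ₑ + eVariationOn f (Set.Icc (x i) (x (i + 1)))) *
        h ^ p.toReal⁻¹ := fun i hi ↦ by
    refine (eLpNorm_restrict_le_of_edist_le measurableSet_Ioc measure_Ioc_lt_top.ne
      (hf.mono_set ?_) fun s hs t ht ↦ eVariationOn.edist_le f (Set.Ioc_subset_Icc_self hs)
        (Set.Ioc_subset_Icc_self ht)).trans ?_
    · rw [Finset.mem_range] at hi
      exact Set.Ioc_subset_Ioc (hx i.zero_le) (hx hi)
    · gcongr
      exact hx_le i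
  calc eLpNorm f p (volume.restrict (Set.Ioc (x 0) (x N)))
      ≤ ∑ i ∈ Finset.range N, eLpNorm f p (volume.restrict (Set.Ioc (x i) (x (i + 1)))) := by
        rw [← biUnion_range_Ioc_succ hx] at hf ⊢
        exact eLpNorm_restrict_biUnion_finset_le (fun _ _ ↦ measurableSet_Ioc)
          (hx.pairwise_disjoint_on_Ioc_succ.set_pairwise _) hf.aestronglyMeasurable hp
    _ ≤ ∑ i ∈ Finset.range N, (‖⨍ t in Set.Ioc (x i) (x (i + 1)), f t‖ₑ +
          eVariationOn f (Set.Icc (x i) (x (i + 1)))) * h ^ p.toReal⁻¹ := Finset.sum_le_sum hcell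
    _ = _ := by rw [← Finset.sum_mul, Finset.sum_add_distrib, eVariationOn.sum' f hx]

end Intervals

section Compactness

theorem exists_monotone_partition {a b h : ℝ} (hab : a ≤ b) (hh : 0 < h) :
    ∃ (N : ℕ) (x : ℕ → ℝ), Monotone x ∧ x 0 = a ∧ x N = b ∧ ∀ i, x (i + 1) - x i ≤ h := by
  obtain ⟨N, hN⟩ := exists_nat_gt ((b - a) / h)
  have hN_pos : (0 : ℝ) < N := (div_nonneg (sub_nonneg.2 hab) hh.le).trans_lt hN
  refine ⟨N, fun i ↦ a + i * ((b - a) / N), fun i j hij ↦ ?_, by simp, by field_simp; ring,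
    fun i ↦ ?_⟩
  · have := sub_nonneg.2 hab
    dsimp only
    gcongr
  · rw [div_lt_comm₀ hh hN_pos] at hN
    push_cast
    linarith

theorem exists_pos_mul_ofReal_rpow_lt {A ε : ℝ≥0∞} (hA : A ≠ ⊤) {r : ℝ} (hr : 0 < r) (hε : 0 < ε) :
    ∃ h : ℝ, 0 < h ∧ A * ENNReal.ofReal h ^ r < ε := by
  have hcont : Continuous fun h : ℝ ↦ A * ENNReal.ofReal h ^ r :=
    (ENNReal.continuous_const_mul hA).comp
      (ENNReal.continuous_rpow_const.comp ENNReal.continuous_ofReal)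
  have hlim : Tendsto (fun h : ℝ ↦ A * ENNReal.ofReal h ^ r) (nhdsWithin 0 (Set.Ioi 0)) (nhds 0) :=
    (hcont.tendsto' 0 0 (by simp [hr])).mono_left nhdsWithin_le_nhds
  exact (eventually_mem_nhdsWithin.and (hlim.eventually_lt_const hε)).exists

variable {E : Type*} [NormedAddCommGroup E] [NormedSpace ℝ E] [CompleteSpace E] {p : ℝ≥0∞}

theorem eLpNorm_sub_restrict_Ioc_le {f g : ℝ → E} (hp : 1 ≤ p) {x : ℕ → ℝ} (hx : Monotone x)
    {N : ℕ} {h : ℝ≥0∞} (hx_le : ∀ i, volume (Set.Ioc (x i) (x (i + 1))) ≤ h)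
    (hf : IntegrableOn f (Set.Ioc (x 0) (x N))) (hg : IntegrableOn g (Set.Ioc (x 0) (x N))) :
    eLpNorm (f - g) p (volume.restrict (Set.Ioc (x 0) (x N))) ≤
      (∑ i ∈ Finset.range N, edist (⨍ t in Set.Ioc (x i) (x (i + 1)), f t)
          (⨍ t in Set.Ioc (x i) (x (i + 1)), g t) +
        (eVariationOn f (Set.Icc (x 0) (x N)) + eVariationOn g (Set.Icc (x 0) (x N)))) *
        h ^ p.toReal⁻¹ := by
  refine (eLpNorm_restrict_Ioc_le_sum_setAverage_add_eVariationOn hp hx hx_le (hf.sub hg)).trans ?_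
  gcongr with i hi
  · have hcell : Set.Ioc (x i) (x (i + 1)) ⊆ Set.Ioc (x 0) (x N) :=
      Set.Ioc_subset_Ioc (hx i.zero_le) (hx (Finset.mem_range.1 hi))
    simp only [setAverage_eq, edist_eq_enorm_sub, ← smul_sub, Pi.sub_apply]
    rw [integral_sub (hf.mono_set hcell) (hg.mono_set hcell)]
  · exact eVariationOn_sub_le f g _

theorem totallyBounded_range_Lp_of_eVariationOn_le [Fact (1 ≤ p)] (hp : p ≠ ⊤) {a b : ℝ}
    (hab : a ≤ b) {ι : Type*} {F : ι → Lp E p (volume.restrict (Set.Ioc a b))} {f : ι → ℝ → E}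
    (hF : ∀ i, F i =ᵐ[volume.restrict (Set.Ioc a b)] f i) {C : ℝ≥0∞} (hC : C ≠ ⊤)
    (hvar : ∀ i, eVariationOn (f i) (Set.Icc a b) ≤ C)
    (havg : ∀ c d, Set.Ioc c d ⊆ Set.Ioc a b →
      TotallyBounded (Set.range fun i ↦ ⨍ t in Set.Ioc c d, f i t)) :
    TotallyBounded (Set.range F) := by
  have hp_one : 1 ≤ p := Fact.out
  have hp_inv_pos : 0 < p.toReal⁻¹ := inv_pos.2 (ENNReal.toReal_pos (by positivity) hp)
  have hf_int (i : ι) : IntegrableOn (f i) (Set.Ioc a b) :=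
    ((Lp.memLp (F i)).integrable hp_one).congr (hF i)
  refine totallyBounded_range_of_edist_lt fun ε hε ↦ ?_
  obtain ⟨h, hh, hhε⟩ :=
    exists_pos_mul_ofReal_rpow_lt (A := 1 + (C + C)) (by finiteness) hp_inv_pos hε
  obtain ⟨N, x, hx, rfl, rfl, hx_le⟩ := exists_monotone_partition hab hh
  have hcell {i : ℕ} (hi : i < N) : Set.Ioc (x i) (x (i + 1)) ⊆ Set.Ioc (x 0) (x N) :=
    Set.Ioc_subset_Ioc (hx i.zero_le) (hx hi)
  refine ⟨Fin N → E, inferInstance, fun i k ↦ ⨍ t in Set.Ioc (x k) (x (k + 1)), f i t,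
    totallyBounded_of_forall_eval_image fun k ↦ ?_, (N : ℝ≥0∞)⁻¹, by simp, fun i j hij ↦ ?_⟩
  · rw [← Set.range_comp]
    exact havg _ _ (hcell k.2)
  have havg_le : ∑ k ∈ Finset.range N, edist (⨍ t in Set.Ioc (x k) (x (k + 1)), f i t)
      (⨍ t in Set.Ioc (x k) (x (k + 1)), f j t) ≤ 1 := by
    refine (Finset.sum_le_card_nsmul _ _ (N : ℝ≥0∞)⁻¹ fun k hk ↦ ?_).trans ?_
    · exact (edist_le_pi_edist _ _ (⟨k, Finset.mem_range.1 hk⟩ : Fin N)).trans hij.le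
    · simp [ENNReal.mul_inv_le_one]
  calc edist (F i) (F j)
      = eLpNorm (f i - f j) p (volume.restrict (Set.Ioc (x 0) (x N))) := by
        rw [Lp.edist_def, eLpNorm_congr_ae ((hF i).sub (hF j))]
    _ ≤ _ := eLpNorm_sub_restrict_Ioc_le hp_one hx
        (fun k ↦ Real.volume_Ioc.trans_le (ENNReal.ofReal_le_ofReal (hx_le k)))
        (hf_int i) (hf_int j)
    _ ≤ (1 + (C + C)) * ENNReal.ofReal h ^ p.toReal⁻¹ := by
        gcongr
        exacts [hvar i, hvar j]
    _ < ε := hhε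

end Compactness

section Ehrling

variable {E F G : Type*} [NormedAddCommGroup E] [NormedSpace ℝ E]
  [NormedAddCommGroup F] [NormedSpace ℝ F] [NormedAddCommGroup G] [NormedSpace ℝ G]

/-- Ehrling's inequality: `‖A x‖` is controlled by an arbitrarily small multiple of `‖x‖` at the
cost of a large multiple of `‖B x‖`. Both operators start from `E`, so that the property passes to
the operators induced on `L^p`; in the classical form `B` factors through `A`. -/
def EhrlingBound (A : E →L[ℝ] F) (B : E →L[ℝ] G) : Prop :=
  ∀ ε : ℝ, 0 < ε → ∃ C : ℝ, 0 ≤ C ∧ ∀ x, ‖A x‖ ≤ ε * ‖x‖ + C * ‖B x‖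

theorem exists_norm_le_add_mul_norm_of_isCompact {B : F →L[ℝ] G} (hB : Function.Injective B)
    {K : Set F} (hK : IsCompact K) {ε : ℝ} (hε : 0 < ε) :
    ∃ C : ℝ, 0 ≤ C ∧ ∀ y ∈ K, ‖y‖ ≤ ε + C * ‖B y‖ := by
  have hB_ne : ∀ y ∈ K ∩ {y | ε ≤ ‖y‖}, ‖B y‖ ≠ 0 := by
    rintro y ⟨-, hy⟩ hBy
    have hy_zero : y = 0 := hB (by simpa using hBy)
    exact (hε.trans_le hy).ne' (by simp [hy_zero])
  obtain ⟨C, hC⟩ := (hK.inter_right (isClosed_le continuous_const continuous_norm)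
    ).exists_bound_of_continuousOn (f := fun y ↦ ‖y‖ / ‖B y‖)
    (continuous_norm.continuousOn.div (by fun_prop) hB_ne)
  refine ⟨max C 0, le_max_right _ _, fun y hy ↦ ?_⟩
  rcases le_total ‖y‖ ε with hyε | hyε
  · exact hyε.trans (le_add_of_nonneg_right (by positivity))
  · have hquot : ‖y‖ / ‖B y‖ ≤ max C 0 :=
      (Real.le_norm_self _).trans ((hC y ⟨hy, hyε⟩).trans (le_max_left _ _))
    rw [div_le_iff₀ ((norm_nonneg _).lt_of_ne' (hB_ne y ⟨hy, hyε⟩))] at hquot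
    linarith

theorem ehrlingBound_of_isCompactOperator {A : E →L[ℝ] F} (hA : IsCompactOperator A)
    {B : F →L[ℝ] G} (hB : Function.Injective B) : EhrlingBound A (B.comp A) := by
  intro ε hε
  obtain ⟨K, hK, hAK⟩ := hA.image_closedBall_subset_compact (f := (A : E →ₗ[ℝ] F)) 1
  obtain ⟨C, hC_nonneg, hC⟩ := exists_norm_le_add_mul_norm_of_isCompact hB hK hε
  refine ⟨C, hC_nonneg, fun x ↦ ?_⟩
  obtain rfl | hx := eq_or_ne x 0
  · simp
  have hx_ne : ‖x‖ ≠ 0 := norm_ne_zero_iff.2 hx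
  have hunit : ‖A (‖x‖⁻¹ • x)‖ ≤ ε + C * ‖B (A (‖x‖⁻¹ • x))‖ :=
    hC _ (hAK ⟨‖x‖⁻¹ • x, by simp [norm_smul, hx], rfl⟩)
  simp only [map_smul, norm_smul, norm_inv, norm_norm] at hunit
  calc ‖A x‖ = ‖x‖ * (‖x‖⁻¹ * ‖A x‖) := by field_simp
    _ ≤ ‖x‖ * (ε + C * (‖x‖⁻¹ * ‖B (A x)‖)) := by gcongr
    _ = ε * ‖x‖ + C * ‖B.comp A x‖ := by
      rw [ContinuousLinearMap.comp_apply]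
      field_simp

namespace EhrlingBound

variable {A : E →L[ℝ] F} {B : E →L[ℝ] G}

theorem totallyBounded_range (h : EhrlingBound A B) {ι : Type*} {u : ι → E}
    (hu : Bornology.IsBounded (Set.range u)) (hBu : TotallyBounded (Set.range fun i ↦ B (u i))) :
    TotallyBounded (Set.range fun i ↦ A (u i)) := by
  obtain ⟨R, hR_pos, hR⟩ := hu.exists_pos_norm_le
  have hdiff (i j : ι) : ‖u i - u j‖ ≤ 2 * R :=
    (norm_sub_le _ _).trans (by linarith [hR _ ⟨i, rfl⟩, hR _ ⟨j, rfl⟩])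
  refine totallyBounded_range_of_edist_lt fun ε hε ↦ ?_
  obtain ⟨η, hη_pos, hηε⟩ := ENNReal.lt_iff_exists_nnreal_btwn.1 hε
  have hη_pos : (0 : ℝ) < η := by exact_mod_cast hη_pos
  obtain ⟨C, hC_nonneg, hC⟩ := h (η / (4 * R)) (by positivity)
  refine ⟨G, inferInstance, fun i ↦ B (u i), hBu, ENNReal.ofReal (η / (2 * (C + 1))),
    ENNReal.ofReal_pos.2 (by positivity), fun i j hij ↦ ?_⟩
  rw [edist_lt_ofReal, dist_eq_norm, ← map_sub, lt_div_iff₀ (by positivity)] at hij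
  refine lt_of_le_of_lt ?_ hηε
  rw [edist_dist, ← ENNReal.ofReal_coe_nnreal]
  gcongr
  calc dist (A (u i)) (A (u j)) = ‖A (u i - u j)‖ := by rw [dist_eq_norm, map_sub]
    _ ≤ η / (4 * R) * ‖u i - u j‖ + C * ‖B (u i - u j)‖ := hC _
    _ ≤ η / (4 * R) * (2 * R) + C * ‖B (u i - u j)‖ := by gcongr; exact hdiff i j
    _ = η / 2 + C * ‖B (u i - u j)‖ := by field_simp; ring
    _ ≤ η := by linarith [norm_nonneg (B (u i - u j))]

theorem compLpL (h : EhrlingBound A B) {α : Type*} [MeasurableSpace α] (μ : Measure α)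
    (p : ℝ≥0∞) [Fact (1 ≤ p)] : EhrlingBound (A.compLpL p μ) (B.compLpL p μ) := by
  intro ε hε
  obtain ⟨C, hC_nonneg, hC⟩ := h ε hε
  refine ⟨C, hC_nonneg, fun f ↦ ?_⟩
  let g : Lp ℝ p μ := (Lp.memLp f).norm.toLp
  let k : Lp ℝ p μ := (Lp.memLp (B.compLpL p μ f)).norm.toLp
  have hpt : ∀ᵐ x ∂μ, ‖A.compLpL p μ f x‖ ≤ ‖(ε • g + C • k) x‖ := by
    filter_upwards [A.coeFn_compLpL f, B.coeFn_compLpL f, Lp.coeFn_add (ε • g) (C • k),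
      Lp.coeFn_smul ε g, Lp.coeFn_smul C k, (Lp.memLp f).norm.coeFn_toLp,
      (Lp.memLp (B.compLpL p μ f)).norm.coeFn_toLp] with x hA hB hadd hg hk hgx hkx
    simp only [hadd, Pi.add_apply, hg, hk, Pi.smul_apply, hgx, hkx, hA, hB, smul_eq_mul, g, k]
    exact (hC (f x)).trans (Real.le_norm_self _)
  calc ‖A.compLpL p μ f‖ ≤ ‖ε • g + C • k‖ := Lp.norm_le_norm_of_ae_le hpt
    _ ≤ ε * ‖g‖ + C * ‖k‖ := by
      simpa only [norm_smul, Real.norm_of_nonneg hε.le, Real.norm_of_nonneg hC_nonneg]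
        using norm_add_le (ε • g) (C • k)
    _ = ε * ‖f‖ + C * ‖B.compLpL p μ f‖ := by
      simp only [g, k, Lp.norm_toLp, eLpNorm_norm, ← Lp.norm_def]

end EhrlingBound

end Ehrling

section Averages

variable {α ι E F : Type*} {m : MeasurableSpace α} {μ : Measure α}
  [NormedAddCommGroup E] [NormedSpace ℝ E] [CompleteSpace E]
  [NormedAddCommGroup F] [NormedSpace ℝ F] [CompleteSpace F]

theorem totallyBounded_range_average_comp {L : E →L[ℝ] F} (hL : IsCompactOperator L)
    {u : ι → α → E} (hu : ∀ i, Integrable (u i) μ) {C : ℝ≥0∞} (hC : C ≠ ⊤)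
    (huC : ∀ i, eLpNorm (u i) 1 μ ≤ C) :
    TotallyBounded (Set.range fun i ↦ ⨍ x, L (u i x) ∂μ) := by
  have havg (i : ι) : ‖⨍ x, u i x ∂μ‖ ≤ (μ.real Set.univ)⁻¹ * C.toReal := by
    rw [average_eq, norm_smul, Real.norm_of_nonneg (by positivity)]
    gcongr
    rw [← toReal_enorm]
    refine ENNReal.toReal_mono hC ((enorm_integral_le_lintegral_enorm _).trans ?_)
    exact eLpNorm_one_eq_lintegral_enorm.symm.trans_le (huC i)
  obtain ⟨K, hK, hLK⟩ := hL.image_closedBall_subset_compact (f := (L : E →ₗ[ℝ] F))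
    ((μ.real Set.univ)⁻¹ * C.toReal)
  refine hK.totallyBounded.subset (Set.range_subset_iff.2 fun i ↦ ?_)
  have hcomm : ⨍ x, L (u i x) ∂μ = L (⨍ x, u i x ∂μ) := L.integral_comp_comm (hu i).to_average
  rw [hcomm]
  exact hLK ⟨_, mem_closedBall_zero_iff.2 (havg i), rfl⟩

theorem totallyBounded_range_compLpL_of_eVariationOn_le {L : E →L[ℝ] F}
    (hL : IsCompactOperator L) {p : ℝ≥0∞} [Fact (1 ≤ p)] (hp : p ≠ ⊤) {a b : ℝ} (hab : a ≤ b)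
    {U : ι → Lp E p (volume.restrict (Set.Ioc a b))} (hU : Bornology.IsBounded (Set.range U))
    {f : ι → ℝ → F} (hf : ∀ i, ∀ᵐ t ∂volume.restrict (Set.Ioc a b), L (U i t) = f i t)
    {C : ℝ≥0∞} (hC : C ≠ ⊤) (hvar : ∀ i, eVariationOn (f i) (Set.Icc a b) ≤ C) :
    TotallyBounded (Set.range fun i ↦ L.compLpL p (volume.restrict (Set.Ioc a b)) (U i)) := by
  have hp_one : 1 ≤ p := Fact.out
  obtain ⟨R, hR⟩ := hU.exists_norm_le
  have hU_le (i : ι) : eLpNorm (U i) p (volume.restrict (Set.Ioc a b)) ≤ ENNReal.ofReal R := by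
    rw [← Lp.enorm_def, ← ofReal_norm]
    exact ENNReal.ofReal_le_ofReal (hR _ ⟨i, rfl⟩)
  obtain ⟨R', hR', hU_one⟩ :=
    exists_eLpNorm_one_le hp_one (fun i ↦ Lp.aestronglyMeasurable (U i)) ENNReal.ofReal_ne_top hU_le
  refine totallyBounded_range_Lp_of_eVariationOn_le hp hab
    (fun i ↦ (L.coeFn_compLpL (U i)).trans (hf i)) hC hvar fun c d hcd ↦ ?_
  have hrestrict := Measure.restrict_mono_set (volume : Measure ℝ) hcd
  have hcongr (i : ι) : ⨍ t in Set.Ioc c d, f i t = ⨍ t in Set.Ioc c d, L (U i t) :=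
    average_congr (EventuallyEq.symm (ae_restrict_of_ae_restrict_of_subset hcd (hf i)))
  simp_rw [hcongr]
  exact totallyBounded_range_average_comp hL
    (fun i ↦ ((Lp.memLp (U i)).integrable hp_one).mono_measure hrestrict)
    hR' fun i ↦ (eLpNorm_mono_measure _ hrestrict).trans (hU_one i)

end Averages

section AubinLions

variable {X₀ X X₁ : Type*} [NormedAddCommGroup X₀] [NormedSpace ℝ X₀] [CompleteSpace X₀]
  [NormedAddCommGroup X] [NormedSpace ℝ X]
  [NormedAddCommGroup X₁] [NormedSpace ℝ X₁] [CompleteSpace X₁]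
  {i₀ : X₀ →L[ℝ] X} {i₁ : X →L[ℝ] X₁} {p : ℝ≥0∞} {a b : ℝ} {C : ℝ≥0∞}

theorem totallyBounded_range_compLpL_of_eVariationOn_comp_le (hi₀ : IsCompactOperator i₀)
    (hi₁ : Function.Injective i₁) [Fact (1 ≤ p)] (hp : p ≠ ⊤) (hab : a ≤ b)
    {ι : Type*} {U : ι → Lp X₀ p (volume.restrict (Set.Ioc a b))}
    (hU : Bornology.IsBounded (Set.range U)) {f : ι → ℝ → X₁}
    (hf : ∀ i, ∀ᵐ t ∂volume.restrict (Set.Ioc a b), i₁ (i₀ (U i t)) = f i t)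
    (hC : C ≠ ⊤) (hvar : ∀ i, eVariationOn (f i) (Set.Icc a b) ≤ C) :
    TotallyBounded (Set.range fun i ↦ i₀.compLpL p (volume.restrict (Set.Ioc a b)) (U i)) :=
  ((ehrlingBound_of_isCompactOperator hi₀ hi₁).compLpL _ p).totallyBounded_range hU
    (totallyBounded_range_compLpL_of_eVariationOn_le (hi₀.clm_comp i₁) hp hab hU hf hC hvar)

theorem exists_tendsto_eLpNorm_comp_sub_of_eVariationOn_comp_le [CompleteSpace X]
    (hi₀ : IsCompactOperator i₀) (hi₁ : Function.Injective i₁) (hp_one : 1 ≤ p) (hp : p ≠ ⊤)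
    (hab : a ≤ b) {u : ℕ → ℝ → X₀}
    (hu : ∀ n, AEStronglyMeasurable (u n) (volume.restrict (Set.Ioc a b))) {R : ℝ≥0∞} (hR : R ≠ ⊤)
    (huR : ∀ n, eLpNorm (u n) p (volume.restrict (Set.Ioc a b)) ≤ R) {f : ℕ → ℝ → X₁}
    (hf : ∀ n, ∀ᵐ t ∂volume.restrict (Set.Ioc a b), i₁ (i₀ (u n t)) = f n t)
    (hC : C ≠ ⊤) (hvar : ∀ n, eVariationOn (f n) (Set.Icc a b) ≤ C) :
    ∃ φ : ℕ → ℕ, StrictMono φ ∧ ∃ g : ℝ → X, Tendsto (fun k ↦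
      eLpNorm (fun t ↦ i₀ (u (φ k) t) - g t) p (volume.restrict (Set.Ioc a b))) atTop (nhds 0) := by
  have : Fact (1 ≤ p) := ⟨hp_one⟩
  have hu_memLp (n : ℕ) : MemLp (u n) p (volume.restrict (Set.Ioc a b)) :=
    ⟨hu n, (huR n).trans_lt hR.lt_top⟩
  have hf_toLp (n : ℕ) : ∀ᵐ t ∂volume.restrict (Set.Ioc a b),
      i₁ (i₀ ((hu_memLp n).toLp (u n) t)) = f n t := by
    filter_upwards [hf n, (hu_memLp n).coeFn_toLp] with t ht hut
    rw [hut, ht]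
  obtain ⟨φ, hφ, g, hg⟩ := exists_tendsto_subseq_of_totallyBounded
    (totallyBounded_range_compLpL_of_eVariationOn_comp_le hi₀ hi₁ hp hab
      (isBounded_range_toLp hu_memLp hR huR) hf_toLp hC hvar)
  refine ⟨φ, hφ, g, ((Lp.tendsto_Lp_iff_tendsto_eLpNorm' _ g).1 hg).congr fun k ↦
    eLpNorm_congr_ae ?_⟩
  filter_upwards [i₀.coeFn_compLpL ((hu_memLp (φ k)).toLp (u (φ k))),
    (hu_memLp (φ k)).coeFn_toLp] with t ht hut
  simp only [Function.comp_apply, Pi.sub_apply, ht, hut]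

end AubinLions

/-- **Aubin–Lions lemma, sequential form (Lemma 2.2(i)).** Let `X₀, X, X₁` be Banach
spaces, `i₀ : X₀ → X` a compact linear operator, `i₁ : X → X₁` an injective continuous
linear operator, `T > 0`, `1 ≤ p < ∞`, `1 ≤ q`. If `(u n)` is bounded in `L^p([0,T];X₀)`
and `i₁ ∘ i₀ ∘ u n` has a primitive representation `w n + ∫₀^t v n` with `(v n)` bounded
in `L^q([0,T];X₁)`, then `(i₀ ∘ u n)` has a subsequence converging strongly in
`L^p([0,T];X)`. -/
theorem aubin_lions_subsequence
    {X₀ X X₁ : Type*}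
    [NormedAddCommGroup X₀] [NormedSpace ℝ X₀] [CompleteSpace X₀]
    [NormedAddCommGroup X] [NormedSpace ℝ X] [CompleteSpace X]
    [NormedAddCommGroup X₁] [NormedSpace ℝ X₁] [CompleteSpace X₁]
    (i₀ : X₀ →L[ℝ] X) (hi₀ : IsCompactOperator i₀)
    (i₁ : X →L[ℝ] X₁) (hi₁ : Function.Injective i₁)
    (T : ℝ) (hT : 0 < T)
    (p : ℝ≥0∞) (hp1 : 1 ≤ p) (hptop : p < ⊤)
    (q : ℝ≥0∞) (hq1 : 1 ≤ q)
    (u : ℕ → ℝ → X₀)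
    (humeas : ∀ n, AEStronglyMeasurable (u n) (volume.restrict (Set.Icc 0 T)))
    (Cu : ℝ≥0∞) (hCu : Cu < ⊤)
    (hubnd : ∀ n, eLpNorm (u n) p (volume.restrict (Set.Icc 0 T)) ≤ Cu)
    (w : ℕ → X₁) (v : ℕ → ℝ → X₁)
    (hvint : ∀ n, IntegrableOn (v n) (Set.Icc 0 T))
    (Cv : ℝ≥0∞) (hCv : Cv < ⊤)
    (hvbnd : ∀ n, eLpNorm (v n) q (volume.restrict (Set.Icc 0 T)) ≤ Cv)
    (hrep : ∀ n, ∀ᵐ t ∂(volume.restrict (Set.Icc 0 T)),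
      i₁ (i₀ (u n t)) = w n + ∫ s in Set.Icc 0 t, v n s) :
    ∃ φ : ℕ → ℕ, StrictMono φ ∧ ∃ uLim : ℝ → X,
      Tendsto (fun k => eLpNorm (fun t => i₀ (u (φ k) t) - uLim t) p
        (volume.restrict (Set.Icc 0 T))) atTop (nhds 0) := by
  have hIcc : volume.restrict (Set.Icc 0 T) = volume.restrict (Set.Ioc 0 T) :=
    Measure.restrict_congr_set Ioc_ae_eq_Icc.symm
  simp only [IntegrableOn, hIcc] at humeas hubnd hvint hvbnd hrep ⊢
  obtain ⟨C, hC, hvC⟩ := exists_eLpNorm_one_le hq1 (fun n ↦ (hvint n).1) hCv.ne hvbnd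
  have hprim (n : ℕ) : ∀ᵐ t ∂volume.restrict (Set.Ioc 0 T),
      i₁ (i₀ (u n t)) = w n + ∫ s in 0..t, v n s := by
    filter_upwards [hrep n, ae_restrict_mem measurableSet_Ioc] with t ht ht_mem
    rw [ht, integral_Icc_eq_integral_Ioc, intervalIntegral.integral_of_le ht_mem.1.le]
  exact exists_tendsto_eLpNorm_comp_sub_of_eVariationOn_comp_le hi₀ hi₁ hp1 hptop.ne hT.le humeas
    hCu.ne hubnd hprim hC fun n ↦ (eVariationOn_primitive_le (hvint n) (w n)).trans (hvC n)
end

section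
/- Let V be a finite-dimensional subspace of L²(𝕋³; ℝ³) each of whose elements is (almost everywhere equal to) an essentially bounded function. Then there exists a constant C > 0, depending only on V, with the following property: for every c > 0, every ρ₁, ρ₂ ∈ L¹(𝕋³) with ρ₁ ≥ c and ρ₂ ≥ c almost everywhere, every linear functional ℓ : V → ℝ, and every u₁, u₂ ∈ V satisfying ∫_{𝕋³} ρ_i u_i·v dx = ℓ(v) for all v ∈ V (i = 1,2), one has ‖u₁ − u₂‖_{L²(𝕋³)} ≤ C c^{−2} ‖ρ₁ − ρ₂‖_{L¹(𝕋³)} ‖ℓ‖, where ‖ℓ‖ = sup{|ℓ(v)| : v ∈ V, ‖v‖_{L²(𝕋³)} ≤ 1}. -/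
open MeasureTheory
open scoped ENNReal RealInnerProductSpace

/-- The three-dimensional torus `𝕋³`, with its Haar (Lebesgue) measure. -/
abbrev Torus3 : Type := AddCircle (1:ℝ) × AddCircle (1:ℝ) × AddCircle (1:ℝ)

/-!
From `M[ρ₁] u₁ = ℓ = M[ρ₂] u₂` one gets `M[ρ₁] (u₁ - u₂) = (M[ρ₂] - M[ρ₁]) u₂`. The weights are
bounded below by `c`, so both forms are `c`-coercive for the `L²` norm, and each of the two
inversions costs a factor `c⁻¹`. The difference `M[ρ₂] - M[ρ₁]` is only controlled by the `L¹`
distance of the weights when the fields are measured in `L^∞`; on `V` this is no loss, because the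
`L^∞` norm is a lower semicontinuous seminorm on a barrelled space, hence dominated by the `L²`
norm.
-/

lemma le_inv_mul_of_mul_sq_le_mul {𝕜 : Type*} [Field 𝕜] [LinearOrder 𝕜] [IsStrictOrderedRing 𝕜]
    {c A t : 𝕜} (hc : 0 < c) (hA : 0 ≤ A) (ht : 0 ≤ t) (h : c * t ^ 2 ≤ A * t) :
    t ≤ c⁻¹ * A := by
  rw [le_inv_mul_iff₀ hc]
  rcases ht.eq_or_lt with rfl | ht
  · rwa [mul_zero]
  · exact le_of_mul_le_mul_right (by rwa [mul_assoc, ← sq]) ht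

lemma norm_sub_le_of_coercive {V : Type*} [SeminormedAddCommGroup V] [NormedSpace ℝ V]
    {B₁ B₂ : V →ₗ[ℝ] V →ₗ[ℝ] ℝ} {c₁ c₂ δ : ℝ} (hc₁ : 0 < c₁) (hc₂ : 0 < c₂) (hδ : 0 ≤ δ)
    (hB₁ : ∀ v, c₁ * ‖v‖ ^ 2 ≤ B₁ v v) (hB₂ : ∀ v, c₂ * ‖v‖ ^ 2 ≤ B₂ v v)
    (hB : ∀ u v, |B₁ u v - B₂ u v| ≤ δ * ‖u‖ * ‖v‖) {ℓ : V →L[ℝ] ℝ} {u₁ u₂ : V}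
    (h₁ : ∀ v, B₁ u₁ v = ℓ v) (h₂ : ∀ v, B₂ u₂ v = ℓ v) :
    ‖u₁ - u₂‖ ≤ δ * (c₁⁻¹ * c₂⁻¹) * ‖ℓ‖ := by
  have norm_u₂_le : ‖u₂‖ ≤ c₂⁻¹ * ‖ℓ‖ := by
    refine le_inv_mul_of_mul_sq_le_mul hc₂ (norm_nonneg ℓ) (norm_nonneg u₂) ?_
    calc c₂ * ‖u₂‖ ^ 2 ≤ B₂ u₂ u₂ := hB₂ u₂
      _ = ℓ u₂ := h₂ u₂
      _ ≤ ‖ℓ‖ * ‖u₂‖ := (le_abs_self _).trans (ℓ.le_opNorm u₂)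
  have norm_sub_le : ‖u₁ - u₂‖ ≤ c₁⁻¹ * (δ * ‖u₂‖) := by
    refine le_inv_mul_of_mul_sq_le_mul hc₁ (by positivity) (norm_nonneg _) ?_
    calc c₁ * ‖u₁ - u₂‖ ^ 2 ≤ B₁ (u₁ - u₂) (u₁ - u₂) := hB₁ _
      _ = -(B₁ u₂ (u₁ - u₂) - B₂ u₂ (u₁ - u₂)) := by
        rw [map_sub B₁, LinearMap.sub_apply, h₁, h₂, neg_sub]
      _ ≤ δ * ‖u₂‖ * ‖u₁ - u₂‖ := (neg_le_abs _).trans (hB u₂ _)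
  calc ‖u₁ - u₂‖ ≤ c₁⁻¹ * (δ * (c₂⁻¹ * ‖ℓ‖)) := norm_sub_le.trans (by gcongr)
    _ = δ * (c₁⁻¹ * c₂⁻¹) * ‖ℓ‖ := by ring

section LpComparison

variable {α E : Type*} [MeasurableSpace α] {μ : Measure α} [NormedAddCommGroup E]
  {p : ℝ≥0∞} [Fact (1 ≤ p)]

lemma lowerSemicontinuous_eLpNorm_coeFn_Lp (q : ℝ≥0∞) :
    LowerSemicontinuous fun f : Lp E p μ ↦ eLpNorm f q μ := by
  refine lowerSemicontinuous_iff_isClosed_preimage.mpr fun C ↦ IsSeqClosed.isClosed ?_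
  intro f g hf hfg
  obtain ⟨φ, -, hφ⟩ := (tendstoInMeasure_of_tendsto_Lp hfg).exists_seq_tendsto_ae
  exact Lp.eLpNorm_le_of_ae_tendsto (.of_forall fun n ↦ hf (φ n))
    (fun n ↦ Lp.aestronglyMeasurable (f (φ n))) hφ

variable {𝕜 : Type*} [NontriviallyNormedField 𝕜] [NormedSpace 𝕜 E]
  {q : ℝ≥0∞} (V : Submodule 𝕜 (Lp E p μ))

/-- The `L^q` norm as a seminorm on a subspace of `L^p` whose elements all lie in `L^q`. -/
noncomputable def eLpNormSeminorm (hq : 1 ≤ q) (hV : ∀ u ∈ V, eLpNorm u q μ < ⊤) :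
    Seminorm 𝕜 V :=
  Seminorm.of (fun u ↦ (eLpNorm (u : Lp E p μ) q μ).toReal)
    (fun u v ↦ by
      rw [← ENNReal.toReal_add (hV u u.2).ne (hV v v.2).ne]
      refine ENNReal.toReal_mono (ENNReal.add_lt_top.2 ⟨hV u u.2, hV v v.2⟩).ne ?_
      rw [Submodule.coe_add, eLpNorm_congr_ae (Lp.coeFn_add _ _)]
      exact eLpNorm_add_le (Lp.aestronglyMeasurable _) (Lp.aestronglyMeasurable _) hq)
    (fun a u ↦ by
      rw [Submodule.coe_smul, eLpNorm_congr_ae (Lp.coeFn_smul _ _), eLpNorm_const_smul,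
        ENNReal.toReal_mul, toReal_enorm])

lemma lowerSemicontinuous_eLpNormSeminorm (hq : 1 ≤ q) (hV : ∀ u ∈ V, eLpNorm u q μ < ⊤) :
    LowerSemicontinuous (eLpNormSeminorm V hq hV) := by
  intro u y hy
  rcases lt_or_ge y 0 with y_neg | y_nonneg
  · exact .of_forall fun v ↦ y_neg.trans_le (apply_nonneg _ v)
  · have ofReal_lt_iff (v : V) : ENNReal.ofReal y < eLpNorm (v : Lp E p μ) q μ ↔
        y < eLpNormSeminorm V hq hV v :=
      ENNReal.ofReal_lt_iff_lt_toReal y_nonneg (hV v v.2).ne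
    have lsc : LowerSemicontinuous fun v : V ↦ eLpNorm (v : Lp E p μ) q μ :=
      (lowerSemicontinuous_eLpNorm_coeFn_Lp q).comp continuous_subtype_val
    simpa only [ofReal_lt_iff] using lsc u _ ((ofReal_lt_iff u).2 hy)

lemma exists_eLpNorm_le_mul_norm [BarrelledSpace 𝕜 V] (hq : 1 ≤ q)
    (hV : ∀ u ∈ V, eLpNorm u q μ < ⊤) :
    ∃ K > (0 : ℝ), ∀ u : V, eLpNorm (u : Lp E p μ) q μ ≤ ENNReal.ofReal (K * ‖u‖) := by
  obtain ⟨K, hK, hbound⟩ := Seminorm.bound_of_continuous_normedSpace (eLpNormSeminorm V hq hV)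
    (Seminorm.continuous_of_lowerSemicontinuous _ (lowerSemicontinuous_eLpNormSeminorm V hq hV))
  exact ⟨K, hK, fun u ↦ (ENNReal.le_ofReal_iff_toReal_le (hV u u.2).ne (by positivity)).2
    (hbound u)⟩

lemma exists_ae_norm_le_mul_norm [BarrelledSpace 𝕜 V] (hV : ∀ u ∈ V, eLpNorm u ⊤ μ < ⊤) :
    ∃ K > (0 : ℝ), ∀ u : V, ∀ᵐ x ∂μ, ‖(u : Lp E p μ) x‖ ≤ K * ‖u‖ := by
  obtain ⟨K, hK, hbound⟩ := exists_eLpNorm_le_mul_norm V le_top hV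
  refine ⟨K, hK, fun u ↦ ?_⟩
  filter_upwards [ae_le_eLpNormEssSup (f := (u : Lp E p μ)) (μ := μ)] with x hx
  rw [← ENNReal.ofReal_le_ofReal_iff (by positivity), ofReal_norm]
  exact hx.trans (eLpNorm_exponent_top.symm.trans_le (hbound u))

end LpComparison

section MassForm

variable {α E : Type*} [MeasurableSpace α] {μ : Measure α} [NormedAddCommGroup E]
  [InnerProductSpace ℝ E]

lemma integrable_mul_inner_of_memLp_top {ρ : α → ℝ} {f g : α → E} (hρ : Integrable ρ μ)
    (hf : MemLp f ⊤ μ) (hg : MemLp g ⊤ μ) : Integrable (fun x ↦ ρ x * ⟪f x, g x⟫) μ :=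
  hρ.mul_of_top_left <| MemLp.of_bilin (fun v w : E ↦ ⟪v, w⟫) 1 hf hg
    (hf.aestronglyMeasurable.inner hg.aestronglyMeasurable)
    (.of_forall fun x ↦ by simpa only [one_mul] using nnnorm_inner_le_nnnorm (f x) (g x))

variable {V : Submodule ℝ (Lp E 2 μ)} {ρ ρ₁ ρ₂ : α → ℝ}

lemma integrable_mul_inner_of_mem (hV : ∀ u ∈ V, eLpNorm u ⊤ μ < ⊤) (hρ : Integrable ρ μ)
    (u v : V) :
    Integrable (fun x ↦ ρ x * ⟪(u : Lp E 2 μ) x, (v : Lp E 2 μ) x⟫) μ :=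
  integrable_mul_inner_of_memLp_top hρ ⟨Lp.aestronglyMeasurable _, hV u u.2⟩
    ⟨Lp.aestronglyMeasurable _, hV v v.2⟩

variable (hV : ∀ u ∈ V, eLpNorm u ⊤ μ < ⊤)

/-- The mass operator `M[ρ] : V → V*`, `⟨M[ρ] u, v⟩ = ∫ ρ u·v`, as a bilinear form on a space `V`
of essentially bounded fields. Boundedness of `V` and integrability of `ρ` are arguments because the
Bochner integral is additive only on integrable functions. -/
noncomputable def massForm (hρ : Integrable ρ μ) : V →ₗ[ℝ] V →ₗ[ℝ] ℝ :=
  LinearMap.mk₂ ℝ (fun u v ↦ ∫ x, ρ x * ⟪(u : Lp E 2 μ) x, (v : Lp E 2 μ) x⟫ ∂μ)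
    (fun u u' v ↦ by
      rw [← integral_add (integrable_mul_inner_of_mem hV hρ u v)
        (integrable_mul_inner_of_mem hV hρ u' v)]
      refine integral_congr_ae ?_
      filter_upwards [Lp.coeFn_add (u : Lp E 2 μ) u'] with x hx
      rw [Submodule.coe_add, hx, Pi.add_apply, inner_add_left, mul_add])
    (fun a u v ↦ by
      rw [smul_eq_mul, ← integral_const_mul]
      refine integral_congr_ae ?_
      filter_upwards [Lp.coeFn_smul a (u : Lp E 2 μ)] with x hx
      rw [Submodule.coe_smul, hx, Pi.smul_apply, real_inner_smul_left, mul_left_comm])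
    (fun u v v' ↦ by
      rw [← integral_add (integrable_mul_inner_of_mem hV hρ u v)
        (integrable_mul_inner_of_mem hV hρ u v')]
      refine integral_congr_ae ?_
      filter_upwards [Lp.coeFn_add (v : Lp E 2 μ) v'] with x hx
      rw [Submodule.coe_add, hx, Pi.add_apply, inner_add_right, mul_add])
    (fun a u v ↦ by
      rw [smul_eq_mul, ← integral_const_mul]
      refine integral_congr_ae ?_
      filter_upwards [Lp.coeFn_smul a (v : Lp E 2 μ)] with x hx
      rw [Submodule.coe_smul, hx, Pi.smul_apply, real_inner_smul_right, mul_left_comm])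

lemma massForm_apply (hρ : Integrable ρ μ) (u v : V) :
    massForm hV hρ u v = ∫ x, ρ x * ⟪(u : Lp E 2 μ) x, (v : Lp E 2 μ) x⟫ ∂μ :=
  rfl

lemma mul_norm_sq_le_massForm_self (hρ : Integrable ρ μ) {c : ℝ} (hc : ∀ᵐ x ∂μ, c ≤ ρ x) (u : V) :
    c * ‖u‖ ^ 2 ≤ massForm hV hρ u u := by
  rw [massForm_apply, Submodule.coe_norm, ← real_inner_self_eq_norm_sq, L2.inner_def,
    ← integral_const_mul]
  refine integral_mono_ae ((L2.integrable_inner _ _).const_mul c)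
    (integrable_mul_inner_of_mem hV hρ u u) ?_
  filter_upwards [hc] with x hx
  exact mul_le_mul_of_nonneg_right hx real_inner_self_nonneg

lemma abs_massForm_sub_massForm_le (hρ₁ : Integrable ρ₁ μ) (hρ₂ : Integrable ρ₂ μ) {u v : V}
    {A B : ℝ} (hu : ∀ᵐ x ∂μ, ‖(u : Lp E 2 μ) x‖ ≤ A) (hv : ∀ᵐ x ∂μ, ‖(v : Lp E 2 μ) x‖ ≤ B) :
    |massForm hV hρ₁ u v - massForm hV hρ₂ u v| ≤ A * B * ∫ x, |ρ₁ x - ρ₂ x| ∂μ := by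
  rw [massForm_apply, massForm_apply, ← integral_sub (integrable_mul_inner_of_mem hV hρ₁ u v)
    (integrable_mul_inner_of_mem hV hρ₂ u v), ← integral_const_mul, ← Real.norm_eq_abs]
  refine norm_integral_le_of_norm_le ((hρ₁.sub hρ₂).abs.const_mul _) ?_
  filter_upwards [hu, hv] with x hux hvx
  have inner_le : |⟪(u : Lp E 2 μ) x, (v : Lp E 2 μ) x⟫| ≤ A * B :=
    (abs_real_inner_le_norm _ _).trans
      (mul_le_mul hux hvx (norm_nonneg _) ((norm_nonneg _).trans hux))
  rw [← sub_mul, Real.norm_eq_abs, abs_mul, mul_comm]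
  exact mul_le_mul_of_nonneg_right inner_le (abs_nonneg _)

end MassForm

theorem galerkin_mass_operator_inverse_lipschitz_general {α E : Type*} [MeasurableSpace α]
    {μ : Measure α} [NormedAddCommGroup E] [InnerProductSpace ℝ E]
    (V : Submodule ℝ (Lp E 2 μ)) [BarrelledSpace ℝ V] (hbdd : ∀ u ∈ V, eLpNorm u ⊤ μ < ⊤) :
    ∃ C > (0 : ℝ), ∀ c > (0 : ℝ), ∀ ρ₁ ρ₂ : α → ℝ, Integrable ρ₁ μ → Integrable ρ₂ μ →
      (∀ᵐ x ∂μ, c ≤ ρ₁ x) → (∀ᵐ x ∂μ, c ≤ ρ₂ x) → ∀ ℓ : V →L[ℝ] ℝ, ∀ u₁ u₂ : V,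
      (∀ v : V, ∫ x, ρ₁ x * ⟪(u₁ : Lp E 2 μ) x, (v : Lp E 2 μ) x⟫ ∂μ = ℓ v) →
      (∀ v : V, ∫ x, ρ₂ x * ⟪(u₂ : Lp E 2 μ) x, (v : Lp E 2 μ) x⟫ ∂μ = ℓ v) →
      ‖u₁ - u₂‖ ≤ C * c⁻¹ ^ 2 * (∫ x, |ρ₁ x - ρ₂ x| ∂μ) * ‖ℓ‖ := by
  obtain ⟨K, hK, norm_le⟩ := exists_ae_norm_le_mul_norm V hbdd
  refine ⟨K ^ 2, by positivity, fun c hc ρ₁ ρ₂ hρ₁ hρ₂ hcρ₁ hcρ₂ ℓ u₁ u₂ h₁ h₂ ↦ ?_⟩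
  set d := ∫ x, |ρ₁ x - ρ₂ x| ∂μ
  have const_nonneg : 0 ≤ K ^ 2 * d :=
    mul_nonneg (sq_nonneg K) (integral_nonneg fun _ ↦ abs_nonneg _)
  have massForm_sub_le (u v : V) :
      |massForm hbdd hρ₁ u v - massForm hbdd hρ₂ u v| ≤ K ^ 2 * d * ‖u‖ * ‖v‖ :=
    (abs_massForm_sub_massForm_le hbdd hρ₁ hρ₂ (norm_le u) (norm_le v)).trans_eq (by ring)
  calc ‖u₁ - u₂‖ ≤ K ^ 2 * d * (c⁻¹ * c⁻¹) * ‖ℓ‖ :=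
        norm_sub_le_of_coercive hc hc const_nonneg (mul_norm_sq_le_massForm_self hbdd hρ₁ hcρ₁)
          (mul_norm_sq_le_massForm_self hbdd hρ₂ hcρ₂) massForm_sub_le h₁ h₂
    _ = K ^ 2 * c⁻¹ ^ 2 * d * ‖ℓ‖ := by ring

/-- **Lipschitz continuity of the inverse Galerkin mass operator
(`‖M⁻¹[ρ₁] − M⁻¹[ρ₂]‖ ≤ C c⁻² ‖ρ₁ − ρ₂‖_{L¹}`).** Let `V` be a finite-dimensional
subspace of `L²(𝕋³;ℝ³)` whose elements are essentially bounded. Then there is `C > 0`,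
depending only on `V`, such that whenever `c > 0`, `ρ₁, ρ₂ ∈ L¹(𝕋³)` with `ρᵢ ≥ c` a.e.,
`ℓ` is a linear functional on `V`, and `u₁, u₂ ∈ V` satisfy `∫ ρᵢ uᵢ·v = ℓ(v)` for all
`v ∈ V`, one has `‖u₁ − u₂‖_{L²} ≤ C c⁻² ‖ρ₁ − ρ₂‖_{L¹} ‖ℓ‖`. -/
theorem galerkin_mass_operator_inverse_lipschitz
    (V : Submodule ℝ (Lp (EuclideanSpace ℝ (Fin 3)) 2 (volume : Measure Torus3)))
    [FiniteDimensional ℝ V]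
    (hbdd : ∀ u ∈ V, eLpNorm (⇑u) ⊤ (volume : Measure Torus3) < ⊤) :
    ∃ C > (0:ℝ), ∀ c > (0:ℝ), ∀ ρ₁ ρ₂ : Torus3 → ℝ,
      Integrable ρ₁ → Integrable ρ₂ →
      (∀ᵐ x ∂(volume : Measure Torus3), c ≤ ρ₁ x) →
      (∀ᵐ x ∂(volume : Measure Torus3), c ≤ ρ₂ x) →
      ∀ ℓ : V →L[ℝ] ℝ, ∀ u₁ u₂ : V,
      (∀ v : V,
        (∫ x, ρ₁ x * ⟪(u₁ : Lp (EuclideanSpace ℝ (Fin 3)) 2 (volume : Measure Torus3)) x,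
          (v : Lp (EuclideanSpace ℝ (Fin 3)) 2 (volume : Measure Torus3)) x⟫) = ℓ v) →
      (∀ v : V,
        (∫ x, ρ₂ x * ⟪(u₂ : Lp (EuclideanSpace ℝ (Fin 3)) 2 (volume : Measure Torus3)) x,
          (v : Lp (EuclideanSpace ℝ (Fin 3)) 2 (volume : Measure Torus3)) x⟫) = ℓ v) →
      ‖u₁ - u₂‖ ≤ C * c⁻¹ ^ 2 * (∫ x, |ρ₁ x - ρ₂ x|) * ‖ℓ‖ := by
  have : CompleteSpace V := FiniteDimensional.complete ℝ V
  exact galerkin_mass_operator_inverse_lipschitz_general V hbdd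
end

section
/- Let (X, μ) be a measure space, and let ρ_n, ρ : X → [0,∞) and u_n, u : X → ℝ³ be measurable. Suppose (i) sup_n ∫_X ρ_n |u_n|³ dμ < ∞ and ∫_X ρ |u|³ dμ < ∞, and (ii) for every M > 0 the truncated functions √ρ_n u_n 𝟙_{{|u_n| ≤ M}} converge to √ρ u 𝟙_{{|u| ≤ M}} strongly in L²(X, μ; ℝ³) as n → ∞. Then √ρ_n u_n converges to √ρ u strongly in L²(X, μ; ℝ³). -/
open MeasureTheory Filter
open scoped ENNReal

/-!
Chebyshev: where `|u| > M` one has `ρ |u|² ≤ M⁻¹ ρ |u|³`, so the parts of `√ρₙ uₙ` and `√ρ u` cut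
off by the truncation at height `M` have `L²` norm `O(M ^ (-1/2))`, uniformly in `n`. A limit in `n`
that holds for the truncations then passes to the functions themselves.
-/

section

variable {X E ι : Type*} [MeasurableSpace X] {μ : Measure X} [NormedAddCommGroup E]

theorem eLpNorm_sub_le_of_approx {p : ℝ≥0∞} {f g F G : X → E}
    (hf : AEStronglyMeasurable f μ) (hg : AEStronglyMeasurable g μ)
    (hF : AEStronglyMeasurable F μ) (hG : AEStronglyMeasurable G μ) :
    eLpNorm (f - g) p μ ≤ p.LpAddConst * eLpNorm (F - G) p μ +
      p.LpAddConst * (p.LpAddConst * (eLpNorm (f - F) p μ + eLpNorm (g - G) p μ)) := by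
  have split : f - g = (F - G) + ((f - F) - (g - G)) := by abel
  calc eLpNorm (f - g) p μ
      ≤ p.LpAddConst * (eLpNorm (F - G) p μ + eLpNorm ((f - F) - (g - G)) p μ) := by
        rw [split]
        exact eLpNorm_add_le' (hF.sub hG) ((hf.sub hF).sub (hg.sub hG)) p
    _ ≤ _ := by
        rw [mul_add]
        gcongr
        exact eLpNorm_sub_le' (hf.sub hF) (hg.sub hG) p

theorem tendsto_eLpNorm_sub_of_frequently_approx {κ : Type*} {l : Filter ι} {m : Filter κ}
    {p : ℝ≥0∞} {f : ι → X → E} {g : X → E} {F : κ → ι → X → E} {G : κ → X → E} {δ : κ → ℝ≥0∞}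
    (hf : ∀ i, AEStronglyMeasurable (f i) μ) (hg : AEStronglyMeasurable g μ)
    (hF : ∀ k i, AEStronglyMeasurable (F k i) μ) (hG : ∀ k, AEStronglyMeasurable (G k) μ)
    (hδ : Tendsto δ m (nhds 0))
    (hfF : ∀ᶠ k in m, ∀ᶠ i in l, eLpNorm (f i - F k i) p μ ≤ δ k)
    (hgG : ∀ᶠ k in m, eLpNorm (g - G k) p μ ≤ δ k)
    (hFG : ∃ᶠ k in m, Tendsto (fun i => eLpNorm (F k i - G k) p μ) l (nhds 0)) :
    Tendsto (fun i => eLpNorm (f i - g) p μ) l (nhds 0) := by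
  set c := p.LpAddConst
  have hc : c ≠ ∞ := p.LpAddConst_lt_top.ne
  have tail_limit : Tendsto (fun k => c * (c * (δ k + δ k))) m (nhds 0) := by
    simpa using ENNReal.Tendsto.const_mul
      (ENNReal.Tendsto.const_mul (hδ.add hδ) (.inr hc)) (.inr hc)
  refine ENNReal.tendsto_nhds_zero.2 fun ε hε => ?_
  have hε₂ : 0 < ε / 2 := ENNReal.half_pos hε.ne'
  obtain ⟨k, hFGk, hfFk, hgGk, hδk⟩ := (hFG.and_eventually
    (hfF.and (hgG.and (ENNReal.tendsto_nhds_zero.1 tail_limit _ hε₂)))).exists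
  have main_limit : Tendsto (fun i => c * eLpNorm (F k i - G k) p μ) l (nhds 0) := by
    simpa using ENNReal.Tendsto.const_mul hFGk (.inr hc)
  filter_upwards [hfFk, ENNReal.tendsto_nhds_zero.1 main_limit _ hε₂] with i hfFki hFGki
  calc eLpNorm (f i - g) p μ
      ≤ c * eLpNorm (F k i - G k) p μ +
          c * (c * (eLpNorm (f i - F k i) p μ + eLpNorm (g - G k) p μ)) :=
        eLpNorm_sub_le_of_approx (hf i) hg (hF k i) (hG k)
    _ ≤ ε / 2 + c * (c * (δ k + δ k)) := by gcongr
    _ ≤ ε / 2 + ε / 2 := by gcongr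
    _ = ε := ENNReal.add_halves ε

theorem rpow_le_rpow_sub_mul_rpow {M t p q : ℝ} (hM : 0 < M) (hMt : M ≤ t) (hpq : p ≤ q) :
    t ^ p ≤ M ^ (p - q) * t ^ q := by
  have ht : 0 < t := hM.trans_le hMt
  calc t ^ p = t ^ (p - q) * t ^ q := by rw [← Real.rpow_add ht, sub_add_cancel]
    _ ≤ M ^ (p - q) * t ^ q := by
      gcongr ?_ * _
      exact Real.rpow_le_rpow_of_nonpos hM hMt (sub_nonpos.2 hpq)

theorem tendsto_ofReal_rpow_mul_rpow_atTop {s r : ℝ} (hs : s < 0) (hr : 0 < r) {K : ℝ≥0∞}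
    (hK : K ≠ ∞) :
    Tendsto (fun M : ℝ => (ENNReal.ofReal (M ^ s) * K) ^ r) atTop (nhds 0) := by
  have power_limit : Tendsto (fun M : ℝ => ENNReal.ofReal (M ^ s)) atTop (nhds 0) := by
    simpa using ENNReal.tendsto_ofReal (tendsto_rpow_neg_atTop (neg_pos.2 hs))
  simpa [hr] using (ENNReal.Tendsto.mul_const power_limit (.inr hK)).ennrpow_const r

variable [NormedSpace ℝ E]

theorem enorm_rpow_inv_smul_rpow {p r : ℝ} (hp : 0 < p) (hr : 0 ≤ r) (v : E) :
    ‖r ^ p⁻¹ • v‖ₑ ^ p = ENNReal.ofReal (r * ‖v‖ ^ p) := by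
  rw [← ofReal_norm, ENNReal.ofReal_rpow_of_nonneg (norm_nonneg _) hp.le,
    norm_smul, Real.norm_of_nonneg (by positivity), Real.mul_rpow (by positivity) (norm_nonneg v),
    Real.rpow_inv_rpow hr hp.ne']

theorem eLpNorm_rpow_inv_smul_sub_indicator_le {p q M : ℝ} (hp : 0 < p) (hpq : p ≤ q)
    (hM : 0 < M) {ρ : X → ℝ} (hρ : 0 ≤ᵐ[μ] ρ) {v : X → E} {K : ℝ≥0∞}
    (hK : ∫⁻ x, ENNReal.ofReal (ρ x * ‖v x‖ ^ q) ∂μ ≤ K) :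
    eLpNorm ((fun x => ρ x ^ p⁻¹ • v x) -
        {x | ‖v x‖ ≤ M}.indicator (fun x => ρ x ^ p⁻¹ • v x)) (ENNReal.ofReal p) μ ≤
      (ENNReal.ofReal (M ^ (p - q)) * K) ^ p⁻¹ := by
  rw [← Set.indicator_compl,
    eLpNorm_eq_lintegral_rpow_enorm_toReal (by simpa using hp) ENNReal.ofReal_ne_top,
    ENNReal.toReal_ofReal hp.le, one_div]
  gcongr ?_ ^ _
  refine le_trans ?_ (mul_le_mul_right hK _)
  rw [← lintegral_const_mul' _ _ ENNReal.ofReal_ne_top]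
  refine lintegral_mono_ae ?_
  filter_upwards [hρ] with x hρx
  by_cases hx : ‖v x‖ ≤ M
  · simp [hx, hp]
  · rw [Set.indicator_of_mem (by simpa using hx), enorm_rpow_inv_smul_rpow hp hρx,
      ← ENNReal.ofReal_mul (by positivity), mul_left_comm]
    exact ENNReal.ofReal_le_ofReal (mul_le_mul_of_nonneg_left
      (rpow_le_rpow_sub_mul_rpow hM (not_le.1 hx).le hpq) hρx)

theorem sqrt_momentum_strong_L2_of_truncations_general {l : Filter ι} {p q : ℝ} (hp : 0 < p)
    (hpq : p < q) {ρn : ι → X → ℝ} {ρ : X → ℝ} {un : ι → X → E} {u : X → E}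
    (hρn : ∀ i, AEMeasurable (ρn i) μ) (hρ : AEMeasurable ρ μ)
    (hun : ∀ i, AEStronglyMeasurable (un i) μ) (hu : AEStronglyMeasurable u μ)
    (hρn_nonneg : ∀ i, 0 ≤ᵐ[μ] ρn i) (hρ_nonneg : 0 ≤ᵐ[μ] ρ) {C : ℝ≥0∞} (hC : C ≠ ∞)
    (hbound : ∀ᶠ i in l, ∫⁻ x, ENNReal.ofReal (ρn i x * ‖un i x‖ ^ q) ∂μ ≤ C)
    (hfin : ∫⁻ x, ENNReal.ofReal (ρ x * ‖u x‖ ^ q) ∂μ ≠ ∞)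
    (htrunc : ∃ᶠ M : ℝ in atTop, Tendsto (fun i => eLpNorm
        ({x | ‖un i x‖ ≤ M}.indicator (fun x => ρn i x ^ p⁻¹ • un i x) -
          {x | ‖u x‖ ≤ M}.indicator (fun x => ρ x ^ p⁻¹ • u x)) (ENNReal.ofReal p) μ)
      l (nhds 0)) :
    Tendsto (fun i => eLpNorm ((fun x => ρn i x ^ p⁻¹ • un i x) - fun x => ρ x ^ p⁻¹ • u x)
      (ENNReal.ofReal p) μ) l (nhds 0) := by
  have hfn (i : ι) : AEStronglyMeasurable (fun x => ρn i x ^ p⁻¹ • un i x) μ :=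
    ((hρn i).pow_const p⁻¹).aestronglyMeasurable.smul (hun i)
  have hf : AEStronglyMeasurable (fun x => ρ x ^ p⁻¹ • u x) μ :=
    (hρ.pow_const p⁻¹).aestronglyMeasurable.smul hu
  have measurable_sublevel {v : X → E} (hv : AEStronglyMeasurable v μ) (M : ℝ) :
      NullMeasurableSet {x | ‖v x‖ ≤ M} μ :=
    nullMeasurableSet_le hv.norm.aemeasurable aemeasurable_const
  refine tendsto_eLpNorm_sub_of_frequently_approx hfn hf
    (fun M i => (hfn i).indicator₀ (measurable_sublevel (hun i) M))
    (fun M => hf.indicator₀ (measurable_sublevel hu M))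
    (tendsto_ofReal_rpow_mul_rpow_atTop (sub_neg.2 hpq) (inv_pos.2 hp) (max_ne_top hC hfin))
    ?_ ?_ htrunc
  · filter_upwards [eventually_gt_atTop 0] with M hM
    filter_upwards [hbound] with i hCi
    exact eLpNorm_rpow_inv_smul_sub_indicator_le hp hpq.le hM (hρn_nonneg i)
      (hCi.trans (le_max_left _ _))
  · filter_upwards [eventually_gt_atTop 0] with M hM
    exact eLpNorm_rpow_inv_smul_sub_indicator_le hp hpq.le hM hρ_nonneg (le_max_right _ _)

end

/-- **Truncation argument in Lemma 6.4.** Let `(X, μ)` be a measure space and let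
`ρ n, ρ ≥ 0` and `u n, u : X → ℝ³` be measurable. If `∫ ρ n |u n|³ dμ` is uniformly
bounded and `∫ ρ |u|³ dμ < ∞`, and if for every `M > 0` the truncations
`√(ρ n) u n 𝟙_{|u n| ≤ M}` converge to `√ρ u 𝟙_{|u| ≤ M}` strongly in `L²(X,μ;ℝ³)`,
then `√(ρ n) u n → √ρ u` strongly in `L²(X,μ;ℝ³)`. -/
theorem sqrt_momentum_strong_L2_of_truncations
    {X : Type*} [MeasurableSpace X] (μ : Measure X)
    (ρn : ℕ → X → ℝ) (ρ : X → ℝ)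
    (un : ℕ → X → EuclideanSpace ℝ (Fin 3)) (u : X → EuclideanSpace ℝ (Fin 3))
    (hρn : ∀ n, Measurable (ρn n)) (hρ : Measurable ρ)
    (hun : ∀ n, Measurable (un n)) (hu : Measurable u)
    (hρnnn : ∀ n x, 0 ≤ ρn n x) (hρnn : ∀ x, 0 ≤ ρ x)
    (C : ℝ≥0∞) (hC : C < ⊤)
    (hbnd : ∀ n, ∫⁻ x, ENNReal.ofReal (ρn n x * ‖un n x‖ ^ 3) ∂μ ≤ C)
    (hbnd' : ∫⁻ x, ENNReal.ofReal (ρ x * ‖u x‖ ^ 3) ∂μ < ⊤)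
    (htrunc : ∀ M > (0:ℝ), Tendsto (fun n =>
      eLpNorm (fun x =>
          ({y | ‖un n y‖ ≤ M}.indicator (fun y => Real.sqrt (ρn n y) • un n y) x)
            - ({y | ‖u y‖ ≤ M}.indicator (fun y => Real.sqrt (ρ y) • u y) x)) 2 μ)
      atTop (nhds 0)) :
    Tendsto (fun n => eLpNorm
        (fun x => Real.sqrt (ρn n x) • un n x - Real.sqrt (ρ x) • u x) 2 μ)
      atTop (nhds 0) := by
  simp only [Real.sqrt_eq_rpow, one_div, ← Real.rpow_ofNat, ← ENNReal.ofReal_ofNat 2]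
    at hbnd hbnd' htrunc ⊢
  exact sqrt_momentum_strong_L2_of_truncations_general two_pos (by norm_num)
    (fun n => (hρn n).aemeasurable) hρ.aemeasurable (fun n => (hun n).aestronglyMeasurable)
    hu.aestronglyMeasurable (fun n => .of_forall (hρnnn n)) (.of_forall hρnn) hC.ne
    (.of_forall hbnd) hbnd'.ne ((eventually_gt_atTop 0).mono htrunc).frequently
end
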